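/- arXiv:1306.6854 — 4 statements merged into one kernel-verified Lean document; each statement's English description precedes it below -/
import Mathlib

section
/- Fix n ≥ 1, vectors I₀, I₁ ∈ ℝⁿ and σ > 0. Let u : ℝ × ℝ → M_n(ℝ), (ε,t) ↦ u^ε_t, be C¹ and g : ℝ × ℝ → M_n(ℝ) be C² with ∂_t g^ε_t = u^ε_t · g^ε_t, g^ε_0 = Id, and each g^ε_t invertible. Define E(ε) = ½ ∫₀¹ ‖u^ε_t‖²_F dt + (1/(2σ²)) ‖g^ε_1 I₀ − I₁‖². Set π = σ⁻² (g^0_1 I₀ − I₁) ∈ ℝⁿ and δu_t = ∂_ε|_{ε=0} u^ε_t. Then dE/dε|_{ε=0} = ∫₀¹ ⟨ u^0_t + ( (g^0_1 (g^0_t)⁻¹)ᵀ π ) (g^0_t I₀)ᵀ , δu_t ⟩_F dt, where a bᵀ ∈ M_n(ℝ) denotes the outer product of column vectors a, b ∈ ℝⁿ. -/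
open Matrix intervalIntegral

attribute [local instance] Matrix.normedAddCommGroup Matrix.normedSpace

/-!
The argument compares the perturbed flow with the unperturbed one: the `t`-derivative of
`(g⁰_t)⁻¹ g^ε_t` is `(g⁰_t)⁻¹ (u^ε_t - u⁰_t) g^ε_t`, so `g^ε_1` is given by an integral (Duhamel's
formula) that can be differentiated in `ε` under the integral sign. Because `u^ε - u⁰` vanishes at
`ε = 0`, only its own derivative contributes, whence `δg_1 = g_1 ∫ g_t⁻¹ δu_t g_t dt` without
exchanging second partial derivatives of `g`. Pairing `δg_1 I₀` with `π` and using
`π · (M N x) = tr ((Mᵀ π xᵀ)ᵀ N)` produces the momentum-map term.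
-/

section PartialDerivative

variable {𝕜 X E : Type*} [NontriviallyNormedField 𝕜] [NormedAddCommGroup X] [NormedSpace 𝕜 X]
  [NormedAddCommGroup E] [NormedSpace 𝕜 E] {F : 𝕜 → X → E}

theorem hasDerivAt_left_of_contDiff (hF : ContDiff 𝕜 1 (fun p : 𝕜 × X => F p.1 p.2)) (ε : 𝕜)
    (x : X) :
    HasDerivAt (fun ε => F ε x) (fderiv 𝕜 (fun p : 𝕜 × X => F p.1 p.2) (ε, x) (1, 0)) ε :=
  (hF.differentiable one_ne_zero (ε, x)).hasFDerivAt.comp_hasDerivAt (f := fun ε => (ε, x)) ε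
    ((hasDerivAt_id ε).prodMk (hasDerivAt_const ε x))

theorem differentiable_left_of_contDiff (hF : ContDiff 𝕜 1 (fun p : 𝕜 × X => F p.1 p.2)) (x : X) :
    Differentiable 𝕜 (fun ε => F ε x) :=
  fun ε => (hasDerivAt_left_of_contDiff hF ε x).differentiableAt

theorem continuous_deriv_left_of_contDiff (hF : ContDiff 𝕜 1 (fun p : 𝕜 × X => F p.1 p.2)) :
    Continuous (fun p : 𝕜 × X => deriv (fun ε => F ε p.2) p.1) := by
  simp only [(hasDerivAt_left_of_contDiff hF _ _).deriv]
  exact (hF.continuous_fderiv one_ne_zero).clm_apply continuous_const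

end PartialDerivative

section ParametricIntegral

variable {E : Type*} [NormedAddCommGroup E] [NormedSpace ℝ E]

theorem hasDerivAt_intervalIntegral_of_continuous {F F' : ℝ → ℝ → E}
    (hF : ∀ ε, Continuous (F ε)) (hF' : Continuous (fun p : ℝ × ℝ => F' p.1 p.2))
    (hderiv : ∀ ε t, HasDerivAt (fun ε => F ε t) (F' ε t) ε) (ε₀ a b : ℝ) :
    HasDerivAt (fun ε => ∫ t in a..b, F ε t) (∫ t in a..b, F' ε₀ t) ε₀ := by
  obtain ⟨C, hC⟩ := ((isCompact_closedBall ε₀ 1).prod (isCompact_uIcc (a := a) (b := b))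
    ).exists_bound_of_continuousOn hF'.continuousOn
  exact (hasDerivAt_integral_of_dominated_loc_of_deriv_le (bound := fun _ => C)
    (Metric.closedBall_mem_nhds ε₀ one_pos)
    (.of_forall fun ε => (hF ε).aestronglyMeasurable)
    ((hF ε₀).intervalIntegrable a b)
    (Continuous.aestronglyMeasurable (by fun_prop))
    (.of_forall fun t ht ε hε => hC (ε, t) ⟨hε, Set.uIoc_subset_uIcc ht⟩)
    intervalIntegrable_const
    (.of_forall fun t _ ε _ => hderiv ε t)).2

end ParametricIntegral

section Flow

open scoped Ring

theorem hasDerivAt_ringInverse_mul_of_flows {𝕜 A : Type*} [NontriviallyNormedField 𝕜]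
    [NormedRing A] [HasSummableGeomSeries A] [NormedAlgebra 𝕜 A] {g h : 𝕜 → A} {u v : A} {t : 𝕜}
    (hg : HasDerivAt g (u * g t) t) (hh : HasDerivAt h (v * h t) t) (hunit : IsUnit (g t)) :
    HasDerivAt (fun s => (g s)⁻¹ʳ * h s) ((g t)⁻¹ʳ * (v - u) * h t) t := by
  obtain ⟨k, hk⟩ := hunit
  have hinv : HasDerivAt (fun s => (g s)⁻¹ʳ) (-((g t)⁻¹ʳ * u)) t := by
    have hring : HasFDerivAt Ring.inverse _ (g t) := hk ▸ hasFDerivAt_ringInverse (𝕜 := 𝕜) k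
    refine (hring.comp_hasDerivAt t hg).congr_deriv ?_
    simp [← hk, mul_assoc]
  exact (hinv.mul hh).congr_deriv (by noncomm_ring)

variable {A : Type*} [NormedRing A] [NormedAlgebra ℝ A] [CompleteSpace A]

theorem flow_eq_mul_add_integral {g h u v : ℝ → A} (hu : Continuous u) (hv : Continuous v)
    (hg : ∀ t, HasDerivAt g (u t * g t) t) (hh : ∀ t, HasDerivAt h (v t * h t) t)
    (hunit : ∀ t, IsUnit (g t)) (a b : ℝ) :
    h b = g b * ((g a)⁻¹ʳ * h a + ∫ t in a..b, (g t)⁻¹ʳ * (v t - u t) * h t) := by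
  have hh_cont : Continuous h := continuous_iff_continuousAt.2 fun t => (hh t).continuousAt
  have hinv_cont : Continuous (fun t => (g t)⁻¹ʳ) :=
    Differentiable.continuous (𝕜 := ℝ) fun t => (hg t).differentiableAt.inverse (hunit t)
  have hftc := integral_eq_sub_of_hasDerivAt
    (fun t _ => hasDerivAt_ringInverse_mul_of_flows (hg t) (hh t) (hunit t))
    (Continuous.intervalIntegrable (by fun_prop) a b)
  rw [hftc, add_sub_cancel, ← mul_assoc, Ring.mul_inverse_cancel _ (hunit b), one_mul]

theorem hasDerivAt_flow_endpoint {u g : ℝ → ℝ → A}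
    (hu : ContDiff ℝ 1 (fun p : ℝ × ℝ => u p.1 p.2))
    (hg : ContDiff ℝ 1 (fun p : ℝ × ℝ => g p.1 p.2))
    (hflow : ∀ ε t, HasDerivAt (g ε) (u ε t * g ε t) t)
    {ε₀ a : ℝ} (hinit : ∀ ε, g ε a = g ε₀ a) (hunit : ∀ t, IsUnit (g ε₀ t)) (b : ℝ) :
    HasDerivAt (fun ε => g ε b)
      (g ε₀ b * ∫ t in a..b, (g ε₀ t)⁻¹ʳ * deriv (fun ε => u ε t) ε₀ * g ε₀ t) ε₀ := by
  have hu_cont := hu.continuous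
  have hg_cont := hg.continuous
  have hδu_cont := continuous_deriv_left_of_contDiff hu
  have hδg_cont := continuous_deriv_left_of_contDiff hg
  have hinv_cont : Continuous (fun t => (g ε₀ t)⁻¹ʳ) :=
    Differentiable.continuous (𝕜 := ℝ) fun t => (hflow ε₀ t).differentiableAt.inverse (hunit t)
  have hduhamel (ε : ℝ) : g ε b = g ε₀ b * ((g ε₀ a)⁻¹ʳ * g ε₀ a +
      ∫ t in a..b, (g ε₀ t)⁻¹ʳ * (u ε t - u ε₀ t) * g ε t) := by
    simpa only [hinit ε] using
      flow_eq_mul_add_integral (by fun_prop) (by fun_prop) (hflow ε₀) (hflow ε) hunit a b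
  have hintegral := hasDerivAt_intervalIntegral_of_continuous
    (F := fun ε t => (g ε₀ t)⁻¹ʳ * (u ε t - u ε₀ t) * g ε t)
    (F' := fun ε t => (g ε₀ t)⁻¹ʳ * deriv (fun ε => u ε t) ε * g ε t +
      (g ε₀ t)⁻¹ʳ * (u ε t - u ε₀ t) * deriv (fun ε => g ε t) ε)
    (by fun_prop)
    ((((hinv_cont.comp continuous_snd).mul hδu_cont).mul hg_cont).add
      (((hinv_cont.comp continuous_snd).mul (by fun_prop)).mul hδg_cont))
    (fun ε t =>
      (((differentiable_left_of_contDiff hu t ε).hasDerivAt.sub_const _).const_mul _).fun_mul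
        (differentiable_left_of_contDiff hg t ε).hasDerivAt) ε₀ a b
  simp only [sub_self, mul_zero, zero_mul, add_zero] at hintegral
  exact ((hintegral.const_add _).const_mul _).congr_of_eventuallyEq (.of_forall hduhamel)

end Flow

theorem map_ringInverse_of_isUnit {M N F : Type*} [MonoidWithZero M] [MonoidWithZero N]
    [FunLike F M N] [MonoidHomClass F M N] (f : F) {x : M} (hx : IsUnit x) :
    f (Ring.inverse x) = Ring.inverse (f x) := by
  obtain ⟨k, rfl⟩ := hx
  rw [Ring.inverse_unit]
  exact (Ring.inverse_unit (Units.map (f : M →* N) k)).symm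

section MatrixCalculus

theorem hasDerivAt_matrix_flow_endpoint {n : Type*} [Fintype n] [DecidableEq n]
    {u g : ℝ → ℝ → Matrix n n ℝ}
    (hu : ContDiff ℝ 1 (fun p : ℝ × ℝ => u p.1 p.2))
    (hg : ContDiff ℝ 1 (fun p : ℝ × ℝ => g p.1 p.2))
    (hflow : ∀ ε t, HasDerivAt (g ε) (u ε t * g ε t) t)
    {ε₀ a : ℝ} (hinit : ∀ ε, g ε a = g ε₀ a) (hunit : ∀ t, IsUnit (g ε₀ t)) (b : ℝ) :
    HasDerivAt (fun ε => g ε b)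
      (g ε₀ b * ∫ t in a..b, (g ε₀ t)⁻¹ * deriv (fun ε => u ε t) ε₀ * g ε₀ t) ε₀ := by
  -- The entrywise sup norm on matrices is not submultiplicative, so the flow is transferred to
  -- the Banach algebra of operators on Euclidean space.
  let Φ : Matrix n n ℝ ≃L[ℝ] (EuclideanSpace ℝ n →L[ℝ] EuclideanSpace ℝ n) :=
    (toEuclideanCLM (𝕜 := ℝ)).toAlgEquiv.toLinearEquiv.toContinuousLinearEquiv
  have hΦ_mul (M N : Matrix n n ℝ) : Φ (M * N) = Φ M * Φ N := map_mul (toEuclideanCLM (𝕜 := ℝ)) M N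
  have hΦ_inv {M : Matrix n n ℝ} (hM : IsUnit M) : Φ M⁻¹ = Ring.inverse (Φ M) := by
    rw [nonsing_inv_eq_ringInverse]
    exact map_ringInverse_of_isUnit (toEuclideanCLM (𝕜 := ℝ)) hM
  have hΦ_integral (f : ℝ → Matrix n n ℝ) : ∫ t in a..b, Φ (f t) = Φ (∫ t in a..b, f t) := by
    simp only [intervalIntegral, map_sub]
    exact congrArg₂ _ (Φ.integral_comp_comm f) (Φ.integral_comp_comm f)
  have hΦ_deriv {f : ℝ → Matrix n n ℝ} {f' : Matrix n n ℝ} {x : ℝ} (hf : HasDerivAt f f' x) :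
      HasDerivAt (fun x => Φ (f x)) (Φ f') x := Φ.hasFDerivAt.comp_hasDerivAt x hf
  have hδu (t : ℝ) : deriv (fun ε => Φ (u ε t)) ε₀ = Φ (deriv (fun ε => u ε t) ε₀) :=
    (hΦ_deriv (differentiable_left_of_contDiff hu t ε₀).hasDerivAt).deriv
  have himage := hasDerivAt_flow_endpoint (Φ.contDiff.comp hu) (Φ.contDiff.comp hg)
    (fun ε t => (hΦ_deriv (hflow ε t)).congr_deriv (hΦ_mul _ _)) (fun ε => congrArg Φ (hinit ε))
    (fun t => (hunit t).map (toEuclideanCLM (𝕜 := ℝ))) b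
  simp only [hδu, ← hΦ_inv (hunit _), ← hΦ_mul, hΦ_integral] at himage
  exact ((Φ.symm.hasFDerivAt.comp_hasDerivAt ε₀ himage).congr_of_eventuallyEq
    (.of_forall fun ε => (Φ.symm_apply_apply (g ε b)).symm)).congr_deriv (Φ.symm_apply_apply _)

section NontriviallyNormedField

variable {𝕜 m n : Type*} [NontriviallyNormedField 𝕜] {f : 𝕜 → Matrix m n 𝕜} {f' : Matrix m n 𝕜}
  {x : 𝕜}

theorem hasDerivAt_matrix [Finite n] :
    HasDerivAt f f' x ↔ ∀ i j, HasDerivAt (fun x => f x i j) (f' i j) x := by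
  have := Fintype.ofFinite n
  exact (hasDerivAt_pi (E' := fun _ : m => n → 𝕜) (φ := f)).trans
    (forall_congr' fun _ => hasDerivAt_pi)

theorem hasDerivAt_mulVec_const [Fintype n] (hf : HasDerivAt f f' x) (w : n → 𝕜) :
    HasDerivAt (fun x => f x *ᵥ w) (f' *ᵥ w) x :=
  hasDerivAt_pi.2 fun i =>
    HasDerivAt.fun_sum fun j _ => (hasDerivAt_matrix.1 hf i j).mul_const (w j)

theorem hasDerivAt_trace_transpose_mul_self [Fintype m] [Fintype n] (hf : HasDerivAt f f' x) :
    HasDerivAt (fun x => trace ((f x)ᵀ * f x)) (2 * trace ((f x)ᵀ * f')) x := by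
  simp only [trace, diag_apply, mul_apply, transpose_apply, Finset.mul_sum]
  refine .fun_sum fun j _ => .fun_sum fun i _ => ?_
  have hentry := hasDerivAt_matrix.1 hf i j
  exact (hentry.fun_mul hentry).congr_deriv (by ring)

end NontriviallyNormedField

variable {m n : Type*} [Fintype m] [Fintype n]

theorem hasDerivAt_half_integral_trace_transpose_mul_self {u : ℝ → ℝ → Matrix m n ℝ}
    (hu : ContDiff ℝ 1 (fun p : ℝ × ℝ => u p.1 p.2)) (ε₀ a b : ℝ) :
    HasDerivAt (fun ε => 1 / 2 * ∫ t in a..b, trace ((u ε t)ᵀ * u ε t))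
      (∫ t in a..b, trace ((u ε₀ t)ᵀ * deriv (fun ε => u ε t) ε₀)) ε₀ := by
  have hu_cont := hu.continuous
  have hδu_cont := continuous_deriv_left_of_contDiff hu
  have hintegral := hasDerivAt_intervalIntegral_of_continuous
    (F := fun ε t => trace ((u ε t)ᵀ * u ε t))
    (F' := fun ε t => 2 * trace ((u ε t)ᵀ * deriv (fun ε => u ε t) ε))
    (by fun_prop)
    (continuous_const.mul (hu_cont.matrix_transpose.matrix_mul hδu_cont).matrix_trace)
    (fun ε t => hasDerivAt_trace_transpose_mul_self
      (differentiable_left_of_contDiff hu t ε).hasDerivAt) ε₀ a b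
  refine (hintegral.const_mul _).congr_deriv ?_
  rw [integral_const_mul, ← mul_assoc, one_div, inv_mul_cancel₀ two_ne_zero, one_mul]

theorem hasDerivAt_half_mul_sum_sq_sub (c : ℝ) (w : m → ℝ) {y : ℝ → m → ℝ} {y' : m → ℝ} {x : ℝ}
    (hy : HasDerivAt y y' x) :
    HasDerivAt (fun x => c / 2 * ∑ i, ((y x - w) i) ^ 2) ((c • (y x - w)) ⬝ᵥ y') x := by
  have hsq (i : m) : HasDerivAt (fun x => ((y x - w) i) ^ 2) (2 * (y x - w) i * y' i) x := by
    simpa using ((hasDerivAt_pi.1 hy i).sub_const (w i)).fun_pow 2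
  refine ((HasDerivAt.fun_sum fun i _ => hsq i).const_mul (c / 2)).congr_deriv ?_
  simp only [dotProduct, Finset.mul_sum, Pi.smul_apply, smul_eq_mul]
  exact Finset.sum_congr rfl fun i _ => by ring

theorem trace_vecMulVec_transpose_mulVec_transpose_mul {R l : Type*} [CommSemiring R] [Fintype l]
    (M : Matrix l m R) (N : Matrix m n R) (p : l → R) (x : n → R) :
    trace ((vecMulVec (Mᵀ *ᵥ p) x)ᵀ * N) = p ⬝ᵥ (M * N) *ᵥ x := by
  rw [transpose_vecMulVec, vecMulVec_mul, trace_vecMulVec, dotProduct_comm, ← dotProduct_mulVec,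
    mulVec_transpose, ← dotProduct_mulVec, mulVec_mulVec]

theorem dotProduct_mul_integral_mulVec {l : Type*} [Fintype l] {f : ℝ → Matrix m n ℝ}
    (hf : Continuous f) (p : l → ℝ) (M : Matrix l m ℝ) (x : n → ℝ) (a b : ℝ) :
    p ⬝ᵥ (M * ∫ t in a..b, f t) *ᵥ x = ∫ t in a..b, p ⬝ᵥ (M * f t) *ᵥ x :=
  ((dotProductBilin ℝ ℝ p ∘ₗ (mulVecBilin ℝ ℝ).flip x ∘ₗ mulLeftLinearMap n ℝ M
    ).toContinuousLinearMap.intervalIntegral_comp_comm (hf.intervalIntegrable a b)).symm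

theorem continuous_nonsing_inv {X K : Type*} [TopologicalSpace X] [Field K] [TopologicalSpace K]
    [IsTopologicalRing K] [ContinuousInv₀ K] [DecidableEq n] {g : X → Matrix n n K}
    (hg : Continuous g) (hunit : ∀ x, IsUnit (g x)) : Continuous (fun x => (g x)⁻¹) := by
  simp only [inv_def, Ring.inverse_eq_inv']
  exact (hg.matrix_det.inv₀ fun x => ((isUnit_iff_isUnit_det _).1 (hunit x)).ne_zero).smul
    hg.matrix_adjugate

end MatrixCalculus

theorem deriv_matching_energy_general {ι : Type*} [Fintype ι] [DecidableEq ι]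
    (I₀ I₁ : ι → ℝ) (c : ℝ) (u g : ℝ → ℝ → Matrix ι ι ℝ)
    (hu : ContDiff ℝ 1 (fun p : ℝ × ℝ => u p.1 p.2))
    (hg : ContDiff ℝ 1 (fun p : ℝ × ℝ => g p.1 p.2))
    (hflow : ∀ ε t : ℝ, HasDerivAt (g ε) (u ε t * g ε t) t)
    (ε₀ : ℝ) (hinit : ∀ ε : ℝ, g ε 0 = g ε₀ 0) (hinv : ∀ t : ℝ, IsUnit (g ε₀ t)) :
    HasDerivAt (fun ε =>
        1 / 2 * (∫ t in (0:ℝ)..1, trace ((u ε t)ᵀ * u ε t)) +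
          c / 2 * ∑ i, ((g ε 1 *ᵥ I₀ - I₁) i) ^ 2)
      (∫ t in (0:ℝ)..1,
        trace ((u ε₀ t + vecMulVec ((g ε₀ 1 * (g ε₀ t)⁻¹)ᵀ *ᵥ (c • (g ε₀ 1 *ᵥ I₀ - I₁)))
          (g ε₀ t *ᵥ I₀))ᵀ * deriv (fun ε => u ε t) ε₀)) ε₀ := by
  have hu_cont : Continuous (u ε₀) := hu.continuous.comp (.prodMk_right ε₀)
  have hg_cont : Continuous (g ε₀) := hg.continuous.comp (.prodMk_right ε₀)
  have hinv_cont := continuous_nonsing_inv hg_cont hinv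
  have hδu_cont : Continuous (fun t => deriv (fun ε => u ε t) ε₀) :=
    (continuous_deriv_left_of_contDiff hu).comp (.prodMk_right ε₀)
  have hkinetic := hasDerivAt_half_integral_trace_transpose_mul_self hu ε₀ 0 1
  have hendpoint := hasDerivAt_mulVec_const
    (hasDerivAt_matrix_flow_endpoint hu hg hflow hinit hinv 1) I₀
  refine (hkinetic.add (hasDerivAt_half_mul_sum_sq_sub c I₁ hendpoint)).congr_deriv ?_
  rw [dotProduct_mul_integral_mulVec (by fun_prop), ← integral_add]
  · refine integral_congr fun t _ => ?_
    simp only [transpose_add, add_mul, trace_add,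
      trace_vecMulVec_transpose_mulVec_transpose_mul, mulVec_mulVec, mul_assoc]
  · exact Continuous.intervalIntegrable (by fun_prop) 0 1
  · exact Continuous.intervalIntegrable (by fun_prop) 0 1

/-- Derivative of the LDDMM matching energy for `G = GL(n,ℝ)` acting on `V = ℝⁿ`:
`DE(u)(t) = u_t + ((g₁ g_t⁻¹)ᵀ π)(g_t I₀)ᵀ` with `π = σ⁻²(g₁ I₀ − I₁)`, paired with the
variation `δu_t` in the Frobenius inner product `⟨A,B⟩_F = tr(AᵀB)`. -/
theorem deriv_matching_energy {n : ℕ} (hn : 1 ≤ n)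
    (I₀ I₁ : Fin n → ℝ) (σ : ℝ) (hσ : 0 < σ)
    (u g : ℝ → ℝ → Matrix (Fin n) (Fin n) ℝ)
    (hu : ContDiff ℝ 1 (fun p : ℝ × ℝ => u p.1 p.2))
    (hg : ContDiff ℝ 2 (fun p : ℝ × ℝ => g p.1 p.2))
    (hflow : ∀ ε t : ℝ, HasDerivAt (fun s => g ε s) (u ε t * g ε t) t)
    (hinit : ∀ ε : ℝ, g ε 0 = 1)
    (hinv : ∀ ε t : ℝ, IsUnit (g ε t))
    (π : Fin n → ℝ) (hπ : π = (σ ^ 2)⁻¹ • (g 0 1 *ᵥ I₀ - I₁)) :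
    deriv (fun ε =>
        (1 / 2) * (∫ t in (0:ℝ)..1, Matrix.trace ((u ε t)ᵀ * u ε t)) +
          (1 / (2 * σ ^ 2)) * ∑ i, ((g ε 1 *ᵥ I₀ - I₁) i) ^ 2) 0 =
      ∫ t in (0:ℝ)..1,
        Matrix.trace
          ((u 0 t + vecMulVec ((g 0 1 * (g 0 t)⁻¹)ᵀ *ᵥ π) (g 0 t *ᵥ I₀))ᵀ *
            deriv (fun ε => u ε t) 0) := by
  have h := deriv_matching_energy_general I₀ I₁ (σ ^ 2)⁻¹ u g hu (hg.of_le one_le_two) hflow 0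
    (fun ε => (hinit ε).trans (hinit 0).symm) (hinv 0)
  simpa only [hπ, one_div, mul_inv, div_eq_inv_mul, mul_one] using h.deriv
end

section
/- Let n ≥ 1 and let u, g : ℝ → M_n(ℝ) be differentiable with ∂_t g_t = u_t · g_t, g_0 = Id, and each g_t invertible. Then the map t ↦ g_tᵀ · u_t · (g_tᵀ)⁻¹ is constant if and only if u satisfies ∂_t u_t = u_t u_tᵀ − u_tᵀ u_t for all t. -/
open Matrix

attribute [local instance] Matrix.normedAddCommGroup Matrix.normedSpace

/-!
If `h' = h v`, then `(h u h⁻¹)' = h (u' - (u v - v u)) h⁻¹`. As `h` is invertible, the conjugate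
`h u h⁻¹` is constant exactly when `u` solves the Lax equation `u' = u v - v u`. The flow equation
`g' = u g` transposes to `h' = h v` with `h = gᵀ` and `v = uᵀ`, for which the Lax equation is the
Euler–Poincaré equation.
-/

open scoped Ring

theorem forall_eq_iff_forall_eq_zero_of_hasDerivAt {𝕜 E : Type*} [RCLike 𝕜]
    [NormedAddCommGroup E] [NormedSpace 𝕜 E] {f f' : 𝕜 → E} (hf : ∀ t, HasDerivAt f (f' t) t) :
    (∀ s t, f s = f t) ↔ ∀ t, f' t = 0 := by
  constructor
  · intro hconst t
    have hzero : HasDerivAt f 0 t :=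
      (hasDerivAt_const t (f t)).congr_of_eventuallyEq (.of_forall fun s => hconst s t)
    exact (hf t).unique hzero
  · intro hzero
    exact is_const_of_deriv_eq_zero (fun t => (hf t).differentiableAt)
      fun t => (hf t).deriv.trans (hzero t)

section Conjugation

variable {𝕜 A : Type*} [NormedRing A] [HasSummableGeomSeries A]

theorem hasDerivAt_ringInverse_comp [NontriviallyNormedField 𝕜] [NormedAlgebra 𝕜 A]
    {h : 𝕜 → A} {h' : A} {t : 𝕜} (hh : HasDerivAt h h' t) (hinv : IsUnit (h t)) :
    HasDerivAt (fun s => (h s)⁻¹ʳ) (-((h t)⁻¹ʳ * h' * (h t)⁻¹ʳ)) t := by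
  obtain ⟨x, hx⟩ := hinv
  have hinverse := hasFDerivAt_ringInverse (𝕜 := 𝕜) x
  rw [hx] at hinverse
  simpa [← hx] using! hinverse.comp_hasDerivAt t hh

theorem hasDerivAt_mul_mul_ringInverse [NontriviallyNormedField 𝕜] [NormedAlgebra 𝕜 A]
    {h u : 𝕜 → A} {u' v : A} {t : 𝕜} (hh : HasDerivAt h (h t * v) t) (hu : HasDerivAt u u' t)
    (hinv : IsUnit (h t)) :
    HasDerivAt (fun s => h s * u s * (h s)⁻¹ʳ)
      (h t * (u' - (u t * v - v * u t)) * (h t)⁻¹ʳ) t := by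
  have hinverse : HasDerivAt (fun s => (h s)⁻¹ʳ) (-(v * (h t)⁻¹ʳ)) t := by
    simpa only [Ring.inverse_mul_cancel_left _ _ hinv] using hasDerivAt_ringInverse_comp hh hinv
  convert! (hh.mul hu).mul hinverse using 1
  rw [Pi.mul_apply]
  noncomm_ring

theorem forall_conj_eq_iff_deriv_eq_commutator [RCLike 𝕜] [NormedAlgebra 𝕜 A] {h u v : 𝕜 → A}
    (hh : ∀ t, HasDerivAt h (h t * v t) t) (hu : Differentiable 𝕜 u)
    (hinv : ∀ t, IsUnit (h t)) :
    (∀ s t, h s * u s * (h s)⁻¹ʳ = h t * u t * (h t)⁻¹ʳ) ↔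
      ∀ t, deriv u t = u t * v t - v t * u t := by
  have hconj t := hasDerivAt_mul_mul_ringInverse (hh t) (hu t).hasDerivAt (hinv t)
  rw [forall_eq_iff_forall_eq_zero_of_hasDerivAt hconj]
  refine forall_congr' fun t => ?_
  rw [(hinv t).ringInverse.mul_left_eq_zero, (hinv t).mul_right_eq_zero, sub_eq_zero]

end Conjugation

theorem conservation_iff_EulerPoincare_general {A : Type*} [NormedRing A] [NormedAlgebra ℝ A]
    [HasSummableGeomSeries A] [StarRing A] [StarModule ℝ A] [ContinuousStar A] {u g : ℝ → A}
    (hu : Differentiable ℝ u) (hflow : ∀ t, HasDerivAt g (u t * g t) t)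
    (hinv : ∀ t, IsUnit (g t)) :
    (∀ s t, star (g s) * u s * (star (g s))⁻¹ʳ = star (g t) * u t * (star (g t))⁻¹ʳ) ↔
      ∀ t, deriv u t = u t * star (u t) - star (u t) * u t := by
  have hflow_star t : HasDerivAt (fun s => star (g s)) (star (g t) * star (u t)) t := by
    simpa only [star_mul] using (hflow t).star
  exact forall_conj_eq_iff_deriv_eq_commutator hflow_star hu fun t => (hinv t).star

/-- Conservation of momentum and the Euler–Poincaré equation for `G = GL(n,ℝ)` with the
Frobenius inner product: along a flow `∂ₜ g_t = u_t g_t`, `g_0 = 1`, the coadjoint-transported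
momentum `Ad*_{g_t} u_t = g_tᵀ u_t (g_tᵀ)⁻¹` is constant in `t` if and only if `u` satisfies
the Euler–Poincaré equation `∂ₜ u_t = u_t u_tᵀ − u_tᵀ u_t`. -/
theorem conservation_iff_EulerPoincare {n : ℕ} (hn : 1 ≤ n)
    (u g : ℝ → Matrix (Fin n) (Fin n) ℝ)
    (hu : Differentiable ℝ u) (hg : Differentiable ℝ g)
    (hflow : ∀ t : ℝ, HasDerivAt g (u t * g t) t)
    (hinit : g 0 = 1)
    (hinv : ∀ t : ℝ, IsUnit (g t)) :
    (∀ s t : ℝ, (g s)ᵀ * u s * ((g s)ᵀ)⁻¹ = (g t)ᵀ * u t * ((g t)ᵀ)⁻¹) ↔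
      (∀ t : ℝ, deriv u t = u t * (u t)ᵀ - (u t)ᵀ * u t) := by
  simp only [nonsing_inv_eq_ringInverse, ← conjTranspose_eq_transpose_of_trivial]
  -- The sup norm is not submultiplicative; the `ℓ²` operator norm is, and it induces the same
  -- topology, hence the same derivatives.
  open scoped Matrix.Norms.L2Operator in
  exact conservation_iff_EulerPoincare_general hu hflow hinv
end

section
/- Let d ≥ 1 and let m, u, v : ℝ^d → ℝ^d be C¹ vector fields with compact support. Then ∫_{ℝ^d} ⟨m(x), Du(x)·v(x) − Dv(x)·u(x)⟩ dx = ∫_{ℝ^d} ⟨Du(x)ᵀ·m(x) + Dm(x)·u(x) + (div u)(x)·m(x), v(x)⟩ dx, where Du(x) denotes the total derivative (Jacobian) of u at x, Du(x)ᵀ its adjoint, and (div u)(x) = tr Du(x). -/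
open MeasureTheory
open scoped RealInnerProductSpace

/-!
The two integrands differ by the divergence of the vector field `⟪m, v⟫ • u`, and the integral of a
divergence vanishes: the derivative of an integrable function, if integrable, has integral zero
(integrate by parts against the constant `1`), and the trace commutes with the integral.
-/

section Divergence

variable {E : Type*} [NormedAddCommGroup E] [NormedSpace ℝ E]

/-- The divergence of a vector field, encoded without coordinates as the trace of its derivative;
it takes the junk value `0` where the field is not differentiable, and everywhere if `E` is
infinite-dimensional. -/
noncomputable def divergence (u : E → E) (x : E) : ℝ :=
  LinearMap.trace ℝ E (fderiv ℝ u x : E →ₗ[ℝ] E)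

variable [FiniteDimensional ℝ E]

theorem divergence_smul {φ : E → ℝ} {u : E → E} {x : E}
    (hφ : DifferentiableAt ℝ φ x) (hu : DifferentiableAt ℝ u x) :
    divergence (fun y ↦ φ y • u y) x = φ x * divergence u x + fderiv ℝ φ x (u x) := by
  simp only [divergence, fderiv_fun_smul hφ hu, ContinuousLinearMap.toLinearMap_add,
    ContinuousLinearMap.toLinearMap_smul, ContinuousLinearMap.coe_smulRight, map_add, map_smul,
    LinearMap.trace_smulRight, smul_eq_mul, ContinuousLinearMap.coe_coe]

variable (E) in
/-- The trace as a continuous linear functional on `E →L[ℝ] E`, which is what lets it commute with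
Bochner integrals. -/
noncomputable def traceCLM : (E →L[ℝ] E) →L[ℝ] ℝ :=
  (LinearMap.trace ℝ E ∘ₗ ContinuousLinearMap.coeLM ℝ).toContinuousLinearMap

variable [MeasurableSpace E] {μ : Measure E}

theorem integrable_divergence {u : E → E} (hu' : Integrable (fderiv ℝ u) μ) :
    Integrable (divergence u) μ :=
  (traceCLM E).integrable_comp hu'

variable [BorelSpace E] [μ.IsAddHaarMeasure]

theorem integral_fderiv_eq_zero {F : Type*} [NormedAddCommGroup F] [NormedSpace ℝ F]
    {f : E → F} (hf : Differentiable ℝ f) (hfi : Integrable f μ)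
    (hf' : Integrable (fderiv ℝ f) μ) : ∫ x, fderiv ℝ f x ∂μ = 0 := by
  ext w
  rw [ContinuousLinearMap.integral_apply hf']
  have by_parts := integral_smul_fderiv_eq_neg_fderiv_smul_of_integrable
    (μ := μ) (f := fun _ ↦ (1 : ℝ)) (g := f) (v := w) (by simp)
    (by simpa using hf'.apply_continuousLinearMap w) (by simpa using hfi)
    (fun _ _ ↦ differentiableAt_const _) (fun x _ ↦ hf x)
  simpa using by_parts

theorem integral_divergence_eq_zero {u : E → E} (hu : Differentiable ℝ u)
    (hui : Integrable u μ) (hu' : Integrable (fderiv ℝ u) μ) :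
    ∫ x, divergence u x ∂μ = 0 := by
  calc ∫ x, divergence u x ∂μ = traceCLM E (∫ x, fderiv ℝ u x ∂μ) :=
        (traceCLM E).integral_comp_comm hu'
    _ = 0 := by rw [integral_fderiv_eq_zero hu hui hu', map_zero]

end Divergence

section Coadjoint

variable {E : Type*} [NormedAddCommGroup E] [InnerProductSpace ℝ E] {m u v : E → E}

theorem hasCompactSupport_inner_smul {X G : Type*} [TopologicalSpace X] [R1Space X]
    [AddCommGroup G] [Module ℝ G] {f g : X → E} {h : X → G}
    (hK : IsCompact (tsupport f ∩ tsupport h ∩ tsupport g)) :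
    HasCompactSupport fun x ↦ ⟪f x, g x⟫ • h x := by
  refine .intro hK fun x hx ↦ ?_
  simp only [Set.mem_inter_iff, not_and_or] at hx
  rcases hx with (hxf | hxh) | hxg
  · simp [image_eq_zero_of_notMem_tsupport hxf]
  · simp [image_eq_zero_of_notMem_tsupport hxh]
  · simp [image_eq_zero_of_notMem_tsupport hxg]

theorem hasCompactSupport_inner_lieBracket
    (hK : IsCompact (tsupport m ∩ tsupport u ∩ tsupport v)) :
    HasCompactSupport fun x ↦ ⟪m x, VectorField.lieBracket ℝ v u x⟫ := by
  refine .intro hK fun x hx ↦ ?_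
  simp only [Set.mem_inter_iff, not_and_or] at hx
  rcases hx with (hxm | hxu) | hxv
  · simp [image_eq_zero_of_notMem_tsupport hxm]
  · simp [VectorField.lieBracket, image_eq_zero_of_notMem_tsupport hxu,
      fderiv_of_notMem_tsupport ℝ hxu]
  · simp [VectorField.lieBracket, image_eq_zero_of_notMem_tsupport hxv,
      fderiv_of_notMem_tsupport ℝ hxv]

variable [FiniteDimensional ℝ E]

/-- The coadjoint action `ad*_u m` of the vector field `u` on the momentum density `m`, which is
identified with a vector field through the inner product. It is dual to `ad_u v = Du·v − Dv·u`,
which is `VectorField.lieBracket ℝ v u` with the arguments in this order. -/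
noncomputable def coadjoint (u m : E → E) (x : E) : E :=
  ContinuousLinearMap.adjoint (fderiv ℝ u x) (m x) + fderiv ℝ m x (u x) + divergence u x • m x

theorem inner_coadjoint_eq_inner_lieBracket_add_divergence {x : E} (hm : DifferentiableAt ℝ m x)
    (hu : DifferentiableAt ℝ u x) (hv : DifferentiableAt ℝ v x) :
    ⟪coadjoint u m x, v x⟫ =
      ⟪m x, VectorField.lieBracket ℝ v u x⟫ + divergence (fun y ↦ ⟪m y, v y⟫ • u y) x := by
  rw [divergence_smul (hm.inner ℝ hv) hu, fderiv_inner_apply ℝ hm hv, coadjoint,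
    VectorField.lieBracket, inner_add_left, inner_add_left, inner_sub_right,
    ContinuousLinearMap.adjoint_inner_left, real_inner_smul_left]
  ring

theorem coadjoint_action_integration_by_parts_general
    [MeasurableSpace E] [BorelSpace E] {μ : Measure E} [μ.IsAddHaarMeasure]
    (hm : ContDiff ℝ 1 m) (hu : ContDiff ℝ 1 u) (hv : ContDiff ℝ 1 v)
    (hK : IsCompact (tsupport m ∩ tsupport u ∩ tsupport v)) :
    ∫ x, ⟪m x, VectorField.lieBracket ℝ v u x⟫ ∂μ = ∫ x, ⟪coadjoint u m x, v x⟫ ∂μ := by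
  let W : E → E := fun x ↦ ⟪m x, v x⟫ • u x
  have hW : ContDiff ℝ 1 W := (hm.inner ℝ hv).smul hu
  have hWs : HasCompactSupport W := hasCompactSupport_inner_smul hK
  have hWi : Integrable W μ := hW.continuous.integrable_of_hasCompactSupport hWs
  have hW' : Integrable (fderiv ℝ W) μ :=
    (hW.continuous_fderiv one_ne_zero).integrable_of_hasCompactSupport (hWs.fderiv ℝ)
  have bracket_continuous : Continuous (VectorField.lieBracket ℝ v u) :=
    ((hu.continuous_fderiv one_ne_zero).clm_apply hv.continuous).sub
      ((hv.continuous_fderiv one_ne_zero).clm_apply hu.continuous)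
  have bracket_integrable : Integrable (fun x ↦ ⟪m x, VectorField.lieBracket ℝ v u x⟫) μ :=
    (hm.continuous.inner bracket_continuous).integrable_of_hasCompactSupport
      (hasCompactSupport_inner_lieBracket hK)
  symm
  calc ∫ x, ⟪coadjoint u m x, v x⟫ ∂μ
      = ∫ x, (⟪m x, VectorField.lieBracket ℝ v u x⟫ + divergence W x) ∂μ :=
        integral_congr_ae <| .of_forall fun x ↦
          inner_coadjoint_eq_inner_lieBracket_add_divergence (hm.differentiable one_ne_zero x)
            (hu.differentiable one_ne_zero x) (hv.differentiable one_ne_zero x)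
    _ = ∫ x, ⟪m x, VectorField.lieBracket ℝ v u x⟫ ∂μ := by
        rw [integral_add bracket_integrable (integrable_divergence hW'),
          integral_divergence_eq_zero (hW.differentiable one_ne_zero) hWi hW', add_zero]

end Coadjoint

/-- The coadjoint action `ad*` on the diffeomorphism group of `ℝ^d` under the `L²` pairing:
for compactly supported `C¹` vector fields `m, u, v`,
`∫ ⟨m, Du·v − Dv·u⟩ = ∫ ⟨Duᵀ·m + Dm·u + (div u)·m, v⟩`. -/
theorem coadjoint_action_integration_by_parts {d : ℕ} (hd : 1 ≤ d)
    (m u v : EuclideanSpace ℝ (Fin d) → EuclideanSpace ℝ (Fin d))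
    (hm : ContDiff ℝ 1 m) (hu : ContDiff ℝ 1 u) (hv : ContDiff ℝ 1 v)
    (hms : HasCompactSupport m) (hus : HasCompactSupport u) (hvs : HasCompactSupport v) :
    ∫ x, ⟪m x, fderiv ℝ u x (v x) - fderiv ℝ v x (u x)⟫ =
      ∫ x, ⟪ContinuousLinearMap.adjoint (fderiv ℝ u x) (m x) + fderiv ℝ m x (u x) +
        (LinearMap.trace ℝ (EuclideanSpace ℝ (Fin d))
          (fderiv ℝ u x : EuclideanSpace ℝ (Fin d) →ₗ[ℝ] EuclideanSpace ℝ (Fin d))) • m x,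
        v x⟫ :=
  coadjoint_action_integration_by_parts_general hm hu hv
    ((hms.isCompact.inter_right (isClosed_tsupport u)).inter_right (isClosed_tsupport v))
end

section
/- Let d ≥ 1, let H be a real Hilbert space, ι : H → (ℝ^d → ℝ^d) an injective linear map, and C > 0 a constant such that for every h ∈ H the vector field ι(h) is C¹ and sup_x ( ‖ι(h)(x)‖ + ‖D(ι h)(x)‖ ) ≤ C‖h‖_H. For a measurable u : [0,1] → H with ∫₀¹‖u_t‖²_H dt < ∞, let φ^u be its flow, i.e. the unique map with φ^u_t(x) = x + ∫₀ᵗ ι(u_s)(φ^u_s(x)) ds for t ∈ [0,1], and recall each φ^u_t is a bijection. Then for any two such u and v there exists a measurable w : [0,1] → H with ∫₀¹‖w_t‖²_H dt < ∞ such that φ^w_1 = φ^u_1 ∘ φ^v_1, and there exists a measurable w' : [0,1] → H with ∫₀¹‖w'_t‖²_H dt < ∞ such that φ^{w'}_1 = (φ^u_1)⁻¹. In other words, the set G_H = { φ^u_1 : u measurable, ∫₀¹‖u_t‖²_H dt < ∞ } is closed under composition and inversion, hence a group of bijections of ℝ^d. -/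
open MeasureTheory intervalIntegral

/-!
Running `v` at double speed on `[0, 1/2]` and then `u` at double speed on `[1/2, 1]` is again a
square-integrable control, and following its vector field means following first the flow of `v` and
then that of `u`; likewise the control `t ↦ -u (1 - t)` retraces the trajectories of `u` backwards.
Both are affine changes of time in the integral equation. What makes them determine `Φ w 1` is
uniqueness for `y t = y 0 + ∫ s in 0..t, V s (y s)` when `V s` is Lipschitz with a constant
integrable in `s`, a consequence of Grönwall's lemma. As reversing time twice gives back `u`, each
of the two flows is a left inverse of the other.
-/

open Set Filter
open scoped NNReal Topology Interval

section Gronwall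

variable {f g : ℝ → ℝ} {a b : ℝ}

lemma integral_mul_eq_zero_of_integral_lt_one (hab : a ≤ b)
    (hf0 : ∀ t ∈ Icc a b, 0 ≤ f t) (hg0 : ∀ t ∈ Icc a b, 0 ≤ g t)
    (hg : IntervalIntegrable g volume a b)
    (hgf : IntervalIntegrable (fun s => g s * f s) volume a b)
    (hfg : ∀ t ∈ Icc a b, f t ≤ ∫ s in a..t, g s * f s) (hg1 : ∫ s in a..b, g s < 1) :
    ∫ s in a..b, g s * f s = 0 := by
  have hgf0 : ∀ t ∈ Icc a b, 0 ≤ g t * f t := fun t ht => mul_nonneg (hg0 t ht) (hf0 t ht)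
  set P := ∫ s in a..b, g s * f s
  have hP0 : 0 ≤ P := integral_nonneg hab hgf0
  have hfP : ∀ t ∈ Icc a b, f t ≤ P := fun t ht =>
    (hfg t ht).trans <| integral_mono_interval le_rfl ht.1 ht.2
      ((ae_restrict_mem measurableSet_Ioc).mono fun s hs => hgf0 s (Ioc_subset_Icc_self hs)) hgf
  have hP : P ≤ (∫ s in a..b, g s) * P :=
    calc P ≤ ∫ s in a..b, g s * P :=
          integral_mono_on hab hgf (hg.mul_const P) fun s hs =>
            mul_le_mul_of_nonneg_left (hfP s hs) (hg0 s hs)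
      _ = (∫ s in a..b, g s) * P := integral_mul_const ..
  nlinarith

lemma exists_mem_Ioc_integral_lt_one {c : ℝ} (hg : IntervalIntegrable g volume a b)
    (hab : a < b) (hac : a < c) : ∃ t ∈ Ioc a c, t ≤ b ∧ ∫ s in a..t, g s < 1 := by
  have hcont : ContinuousWithinAt (fun t => ∫ s in a..t, g s) (Icc a b) a := by
    simpa only [uIcc_of_le hab.le] using
      continuousOn_primitive_interval' hg left_mem_uIcc a left_mem_uIcc
  have hsmall : ∀ᶠ t in 𝓝[>] a, ∫ s in a..t, g s < 1 := by
    refine ((hcont.mono Ioc_subset_Icc_self).mono_left ?_).eventually_lt_const (by simp)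
    exact (nhdsWithin_Ioc_eq_nhdsGT hab).ge
  obtain ⟨t, ⟨ht1, htc⟩, htb⟩ :=
    ((hsmall.and (Ioc_mem_nhdsGT hac)).and (Ioc_mem_nhdsGT hab)).exists
  exact ⟨t, htc, htb.2, ht1⟩

theorem eq_zero_of_le_integral_mul
    (hf0 : ∀ t ∈ Icc a b, 0 ≤ f t) (hg0 : ∀ t ∈ Icc a b, 0 ≤ g t)
    (hg : IntervalIntegrable g volume a b)
    (hgf : IntervalIntegrable (fun s => g s * f s) volume a b)
    (hfg : ∀ t ∈ Icc a b, f t ≤ ∫ s in a..t, g s * f s) :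
    ∀ t ∈ Icc a b, f t = 0 := by
  suffices hsub : Icc a b ⊆ {t | ∫ s in a..t, g s * f s = 0} from
    fun t ht => le_antisymm ((hfg t ht).trans (hsub ht).le) (hf0 t ht)
  obtain hba | hab := lt_or_ge b a
  · simp [Icc_eq_empty_of_lt hba]
  refine IsClosed.Icc_subset_of_forall_exists_gt ?_ (by simp) ?_
  · have hcont := continuousOn_primitive_interval' hgf left_mem_uIcc
    rw [uIcc_of_le hab] at hcont
    rw [inter_comm]
    exact hcont.preimage_isClosed_of_isClosed isClosed_Icc isClosed_singleton
  · rintro x ⟨hx, hxab⟩ y hxy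
    have hint : ∀ {k : ℝ → ℝ} {s t : ℝ}, IntervalIntegrable k volume a b → s ∈ Icc a b →
        t ∈ Icc a b → IntervalIntegrable k volume s t := fun hk hs ht =>
      hk.mono_set ((uIcc_subset_Icc hs ht).trans Icc_subset_uIcc)
    have haI : a ∈ Icc a b := left_mem_Icc.2 hab
    have hxI : x ∈ Icc a b := Ico_subset_Icc_self hxab
    have hfrom : ∀ t ∈ Icc a b, ∫ s in a..t, g s * f s = ∫ s in x..t, g s * f s := by
      intro t ht
      rw [← integral_add_adjacent_intervals (hint hgf haI hxI) (hint hgf hxI ht), hx.out, zero_add]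
    obtain ⟨t, htxy, htb, hg1⟩ :=
      exists_mem_Ioc_integral_lt_one (hint hg hxI (right_mem_Icc.2 hab)) hxab.2 hxy
    have htI : t ∈ Icc a b := ⟨hxI.1.trans htxy.1.le, htb⟩
    have hsubI : Icc x t ⊆ Icc a b := Icc_subset_Icc hxI.1 htb
    refine ⟨t, ?_, htxy⟩
    rw [mem_ofPred_eq, hfrom t htI]
    exact integral_mul_eq_zero_of_integral_lt_one htxy.1.le (fun s hs => hf0 s (hsubI hs))
      (fun s hs => hg0 s (hsubI hs)) (hint hg hxI htI) (hint hgf hxI htI)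
      (fun s hs => (hfg s (hsubI hs)).trans (hfrom s (hsubI hs)).le) hg1

end Gronwall

section AffineTimeChange

variable {E : Type*} [NormedAddCommGroup E] {a b c d t : ℝ}

lemma mul_add_mem_uIcc (c d : ℝ) (ht : t ∈ [[a, b]]) : c * t + d ∈ [[c * a + d, c * b + d]] := by
  rw [← image_add_const_uIcc, ← image_const_mul_uIcc]
  exact mem_image_of_mem _ (mem_image_of_mem _ ht)

lemma intervalIntegrable_comp_mul_add {f : ℝ → E}
    (hf : IntervalIntegrable f volume (c * a + d) (c * b + d)) :
    IntervalIntegrable (fun t => f (c * t + d)) volume a b := by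
  obtain rfl | hc := eq_or_ne c 0
  · simp
  · simpa [hc] using (hf.comp_add_right d).comp_mul_left (c := c)

/-- The time change by `t ↦ c * t + d` of a time-dependent vector field (or of a control). The
factor `c` is the chain rule: it turns trajectories `y` into trajectories `t ↦ y (c * t + d)`. -/
def reparam {M : Type*} [SMul ℝ M] (c d : ℝ) (f : ℝ → M) (t : ℝ) : M :=
  c • f (c * t + d)

lemma reparam_neg_one_one_reparam {M : Type*} [AddCommGroup M] [Module ℝ M] (f : ℝ → M) :
    reparam (-1) 1 (reparam (-1) 1 f) = f := by
  funext t
  simp [reparam]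

/-- The concatenation of two time-dependent vector fields (or controls) given on `[0, 1]`: first
`f`, then `g`, each run at double speed. -/
noncomputable def timeConcat {M : Type*} [SMul ℝ M] (f g : ℝ → M) (t : ℝ) : M :=
  if t ≤ 1 / 2 then reparam 2 0 f t else reparam 2 (-1) g t

lemma timeConcat_eq_left {M : Type*} [SMul ℝ M] (f g : ℝ → M) (ht : t ≤ 1 / 2) :
    timeConcat f g t = reparam 2 0 f t :=
  if_pos ht

lemma timeConcat_eq_right {M : Type*} [SMul ℝ M] (f g : ℝ → M) (ht : 1 / 2 < t) :
    timeConcat f g t = reparam 2 (-1) g t :=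
  if_neg ht.not_ge

lemma map_reparam {M N : Type*} [AddCommMonoid M] [Module ℝ M] [AddCommMonoid N] [Module ℝ N]
    (L : M →ₗ[ℝ] N) (c d : ℝ) (f : ℝ → M) :
    (fun t => L (reparam c d f t)) = reparam c d fun t => L (f t) := by
  funext t
  simp only [reparam, map_smul]

lemma map_timeConcat {M N : Type*} [AddCommMonoid M] [Module ℝ M] [AddCommMonoid N] [Module ℝ N]
    (L : M →ₗ[ℝ] N) (f g : ℝ → M) :
    (fun t => L (timeConcat f g t)) = timeConcat (fun t => L (f t)) fun t => L (g t) := by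
  funext t
  simp only [timeConcat, reparam, apply_ite L, map_smul]

end AffineTimeChange

/-- `y` solves `y' = V t y` in Carathéodory's sense on the interval with endpoints `a` and `b`, in
either order. Comparing `y` at two arbitrary times, rather than with its value at `a`, makes the
notion insensitive to the direction of time. -/
structure IsCaratheodorySolution {E : Type*} [NormedAddCommGroup E] [NormedSpace ℝ E]
    (V : ℝ → E → E) (y : ℝ → E) (a b : ℝ) : Prop where
  intervalIntegrable : IntervalIntegrable (fun s => V s (y s)) volume a b
  sub_eq_integral : ∀ s ∈ [[a, b]], ∀ t ∈ [[a, b]], y t - y s = ∫ r in s..t, V r (y r)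

namespace IsCaratheodorySolution

variable {E : Type*} [NormedAddCommGroup E] [NormedSpace ℝ E] {V W : ℝ → E → E} {y z : ℝ → E}
  {a b c d : ℝ}

lemma of_eq_add_integral (hint : IntervalIntegrable (fun s => V s (y s)) volume a b)
    (hc : c ∈ [[a, b]]) (hy : ∀ t ∈ [[a, b]], y t = y c + ∫ r in c..t, V r (y r)) :
    IsCaratheodorySolution V y a b where
  intervalIntegrable := hint
  sub_eq_integral s hs t ht := by
    rw [hy s hs, hy t ht, add_sub_add_left_eq_sub]
    exact integral_interval_sub_left (hint.mono_set (uIcc_subset_uIcc hc ht))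
      (hint.mono_set (uIcc_subset_uIcc hc hs))

lemma eq_add_integral (hy : IsCaratheodorySolution V y a b) {s t : ℝ} (hs : s ∈ [[a, b]])
    (ht : t ∈ [[a, b]]) : y t = y s + ∫ r in s..t, V r (y r) :=
  eq_add_of_sub_eq' (hy.sub_eq_integral s hs t ht)

lemma symm (hy : IsCaratheodorySolution V y a b) : IsCaratheodorySolution V y b a where
  intervalIntegrable := hy.intervalIntegrable.symm
  sub_eq_integral := by simpa only [uIcc_comm b a] using hy.sub_eq_integral

lemma continuousOn (hy : IsCaratheodorySolution V y a b) : ContinuousOn y [[a, b]] :=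
  (continuousOn_const.add
    (continuousOn_primitive_interval' hy.intervalIntegrable left_mem_uIcc)).congr
    fun _ ht => hy.eq_add_integral left_mem_uIcc ht

lemma congr (hy : IsCaratheodorySolution V y a b) (hyz : EqOn y z [[a, b]])
    (hVW : ∀ t ∈ Ι a b, V t = W t) : IsCaratheodorySolution W z a b := by
  have hEq : EqOn (fun s => V s (y s)) (fun s => W s (z s)) (Ι a b) := fun s hs => by
    simp only [hVW s hs, hyz (uIoc_subset_uIcc hs)]
  refine ⟨hy.intervalIntegrable.congr hEq, fun s hs t ht => ?_⟩
  rw [← hyz hs, ← hyz ht, hy.sub_eq_integral s hs t ht]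
  exact integral_congr_ae <| .of_forall fun r hr =>
    hEq (uIoc_subset_uIoc_of_uIcc_subset_uIcc (uIcc_subset_uIcc hs ht) hr)

lemma trans (hab : IsCaratheodorySolution V y a b) (hbc : IsCaratheodorySolution V y b c)
    (hb : b ∈ [[a, c]]) : IsCaratheodorySolution V y a c := by
  refine of_eq_add_integral (hab.intervalIntegrable.trans hbc.intervalIntegrable) hb fun t ht => ?_
  obtain ht | ht := uIcc_subset_uIcc_union_uIcc (b := b) ht
  · exact hab.eq_add_integral right_mem_uIcc ht
  · exact hbc.eq_add_integral left_mem_uIcc ht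

lemma comp_mul_add (hy : IsCaratheodorySolution V y (c * a + d) (c * b + d)) :
    IsCaratheodorySolution (reparam c d V) (fun t => y (c * t + d)) a b where
  intervalIntegrable := (intervalIntegrable_comp_mul_add hy.intervalIntegrable).smul c
  sub_eq_integral s hs t ht := by
    simp only [reparam, Pi.smul_apply, intervalIntegral.integral_smul]
    rw [smul_integral_comp_mul_add (fun r => V r (y r)) c d]
    exact hy.sub_eq_integral _ (mul_add_mem_uIcc c d hs) _ (mul_add_mem_uIcc c d ht)

lemma reverse (hy : IsCaratheodorySolution V y 0 1) :
    IsCaratheodorySolution (reparam (-1) 1 V) (fun t => y (1 - t)) 0 1 := by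
  have hrev : IsCaratheodorySolution (reparam (-1) 1 V) (fun t => y (-1 * t + 1)) 0 1 :=
    comp_mul_add (by simpa using hy.symm)
  simpa only [neg_one_mul, neg_add_eq_sub] using hrev

lemma timeConcat (hy : IsCaratheodorySolution V y 0 1) (hz : IsCaratheodorySolution W z 0 1)
    (hyz : y 1 = z 0) :
    IsCaratheodorySolution (timeConcat V W)
      (fun t => if t ≤ 1 / 2 then y (2 * t) else z (2 * t - 1)) 0 1 := by
  have hfirst : IsCaratheodorySolution (reparam 2 0 V) (fun t => y (2 * t + 0)) 0 (1 / 2) :=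
    comp_mul_add (by simpa using hy)
  have hsecond : IsCaratheodorySolution (reparam 2 (-1) W) (fun t => z (2 * t + -1)) (1 / 2) 1 :=
    comp_mul_add (by norm_num; exact hz)
  refine (hfirst.congr (fun t ht => ?_) fun t ht => ?_).trans
    (hsecond.congr (fun t ht => ?_) fun t ht => ?_) (by rw [uIcc_of_le] <;> norm_num)
  · rw [uIcc_of_le (by norm_num)] at ht
    simp only [add_zero, if_pos ht.2]
  · rw [uIoc_of_le (by norm_num)] at ht
    exact (timeConcat_eq_left V W ht.2).symm
  · rw [uIcc_of_le (by norm_num)] at ht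
    obtain rfl | hlt := ht.1.eq_or_lt
    · norm_num [hyz]
    · simp only [if_neg hlt.not_ge, sub_eq_add_neg]
  · rw [uIoc_of_le (by norm_num)] at ht
    exact (timeConcat_eq_right V W ht.1).symm

theorem eqOn_of_lipschitzWith {K : ℝ → ℝ≥0}
    (hV : ∀ t ∈ Icc a b, LipschitzWith (K t) (V t))
    (hK : IntervalIntegrable (fun t => (K t : ℝ)) volume a b)
    (hy : IsCaratheodorySolution V y a b) (hz : IsCaratheodorySolution V z a b)
    (hyz : y a = z a) : EqOn y z (Icc a b) := by
  have hKyz : IntervalIntegrable (fun s => K s * ‖y s - z s‖) volume a b :=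
    hK.mul_continuousOn (hy.continuousOn.sub hz.continuousOn).norm
  have hle : ∀ t ∈ Icc a b, ‖y t - z t‖ ≤ ∫ s in a..t, K s * ‖y s - z s‖ := by
    intro t ht
    have htu : t ∈ [[a, b]] := Icc_subset_uIcc ht
    have hsub : [[a, t]] ⊆ [[a, b]] := uIcc_subset_uIcc_left htu
    rw [hy.eq_add_integral left_mem_uIcc htu, hz.eq_add_integral left_mem_uIcc htu, hyz,
      add_sub_add_left_eq_sub, ← intervalIntegral.integral_sub
        (hy.intervalIntegrable.mono_set hsub) (hz.intervalIntegrable.mono_set hsub)]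
    refine norm_integral_le_of_norm_le ht.1 (.of_forall fun s hs => ?_) (hKyz.mono_set hsub)
    exact (hV s ⟨hs.1.le, hs.2.trans ht.2⟩).norm_sub_le _ _
  exact fun t ht => sub_eq_zero.1 <| norm_eq_zero.1 <|
    eq_zero_of_le_integral_mul (fun _ _ => norm_nonneg _) (fun t _ => (K t).coe_nonneg) hK hKyz
      hle t ht

end IsCaratheodorySolution

section AutomaticIntegrability

variable {E : Type*} [NormedAddCommGroup E] {a b : ℝ} {g : ℝ → ℝ}

lemma exists_maximal_integrableOn_Ioc {F : ℝ → E} (hab : a ≤ b) (hg : IntegrableOn g (Ioc a b))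
    (hFg : ∀ t ∈ Ioc a b, ‖F t‖ ≤ g t) :
    ∃ T ∈ Icc a b, IntegrableOn F (Ioc a T) ∧ ∀ t ∈ Ioc T b, ¬ IntegrableOn F (Ioc a t) := by
  let A := {t | t ∈ Icc a b ∧ IntegrableOn F (Ioc a t)}
  have haA : a ∈ A := by simp [A, hab]
  have hbdd : BddAbove A := ⟨b, fun t ht => ht.1.2⟩
  obtain ⟨τ, -, hτ, hτA⟩ := exists_seq_tendsto_sSup ⟨a, haA⟩ hbdd
  have hsub : ⋃ n, Ioc a (τ n) ⊆ Ioc a b :=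
    iUnion_subset fun n => Ioc_subset_Ioc_right (hτA n).1.2
  have hunion : IntegrableOn F (⋃ n, Ioc a (τ n)) :=
    (hg.mono_set hsub).mono' (aestronglyMeasurable_iUnion_iff.2 fun n => (hτA n).2.1)
      (ae_restrict_of_forall_mem (.iUnion fun _ => measurableSet_Ioc)
        fun t ht => hFg t (hsub ht))
  have hIoo : Ioo a (sSup A) ⊆ ⋃ n, Ioc a (τ n) := fun t ht =>
    have ⟨n, hn⟩ := (hτ.eventually_const_lt ht.2).exists
    mem_iUnion.2 ⟨n, ht.1, hn.le⟩
  have haT : a ≤ sSup A := le_csSup hbdd haA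
  exact ⟨sSup A, ⟨haT, csSup_le ⟨a, haA⟩ fun t ht => ht.1.2⟩,
    (integrableOn_Ioc_iff_integrableOn_Ioo (by finiteness)).2 (hunion.mono_set hIoo),
    fun t ht hF => ht.1.not_ge (le_csSup hbdd ⟨⟨haT.trans ht.1.le, ht.2⟩, hF⟩)⟩

/- Beyond the maximal `T` for which the integrand is integrable on `(a, T]`, the junk value
`∫ s in a..t, V s (y s) = 0` forces `y t = x`, so there the integrand is the measurable function
`s ↦ V s x`. -/
theorem intervalIntegrable_of_eq_add_integral [NormedSpace ℝ E] {V : ℝ → E → E} {y : ℝ → E}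
    {x : E} (hab : a ≤ b) (hg : IntervalIntegrable g volume a b)
    (hVg : ∀ t ∈ Icc a b, ∀ z, ‖V t z‖ ≤ g t)
    (hVx : AEStronglyMeasurable (fun s => V s x) (volume.restrict (Ioc a b)))
    (hy : ∀ t ∈ Icc a b, y t = x + ∫ s in a..t, V s (y s)) :
    IntervalIntegrable (fun s => V s (y s)) volume a b := by
  rw [intervalIntegrable_iff_integrableOn_Ioc_of_le hab] at hg ⊢
  have hVyg : ∀ t ∈ Ioc a b, ‖V t (y t)‖ ≤ g t := fun t ht => hVg t (Ioc_subset_Icc_self ht) _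
  obtain ⟨T, hT, hbefore, hafter⟩ := exists_maximal_integrableOn_Ioc hab hg hVyg
  have hsub : Ioc T b ⊆ Ioc a b := Ioc_subset_Ioc_left hT.1
  have hconst : ∀ t ∈ Ioc T b, y t = x := by
    intro t ht
    have hat : a ≤ t := hT.1.trans ht.1.le
    rw [hy t ⟨hat, ht.2⟩, intervalIntegral.integral_undef, add_zero]
    rw [intervalIntegrable_iff_integrableOn_Ioc_of_le hat]
    exact hafter t ht
  have hmeas : AEStronglyMeasurable (fun s => V s (y s)) (volume.restrict (Ioc T b)) :=
    (hVx.mono_set hsub).congr <| ae_restrict_of_forall_mem measurableSet_Ioc fun t ht => by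
      simp only [hconst t ht]
  rw [← Ioc_union_Ioc_eq_Ioc hT.1 hT.2]
  exact hbefore.union <| (hg.mono_set hsub).mono' hmeas <|
    ae_restrict_of_forall_mem measurableSet_Ioc fun t ht => hVyg t (hsub ht)

end AutomaticIntegrability

section Flow

variable {E : Type*} [NormedAddCommGroup E] [NormedSpace ℝ E]

/-- Bounded Lipschitz vector fields with bounds integrable over the time interval `[0, 1]`: the
class for which the integral equation of the flow has at most one solution. -/
structure IsCaratheodoryField (V : ℝ → E → E) (g : ℝ → ℝ≥0) : Prop where
  aestronglyMeasurable : ∀ x, AEStronglyMeasurable (fun s => V s x) (volume.restrict (Ioc 0 1))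
  norm_le : ∀ t ∈ Icc (0 : ℝ) 1, ∀ x, ‖V t x‖ ≤ g t
  lipschitzWith : ∀ t ∈ Icc (0 : ℝ) 1, LipschitzWith (g t) (V t)
  intervalIntegrable : IntervalIntegrable (fun t => (g t : ℝ)) volume 0 1

/-- `φ t` is the time-`t` flow map of `V`, for `t ∈ [0, 1]`. Integrability of the integrand is not
part of the definition; see `IsFlow.isCaratheodorySolution`. -/
def IsFlow (V φ : ℝ → E → E) : Prop :=
  ∀ t ∈ Icc (0 : ℝ) 1, ∀ x, φ t x = x + ∫ s in (0 : ℝ)..t, V s (φ s x)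

namespace IsFlow

variable {V W φ ψ χ : ℝ → E → E} {g : ℝ → ℝ≥0}

lemma apply_zero (hφ : IsFlow V φ) (x : E) : φ 0 x = x := by
  simpa using hφ 0 (by simp) x

lemma isCaratheodorySolution (hφ : IsFlow V φ) (hV : IsCaratheodoryField V g) (x : E) :
    IsCaratheodorySolution V (fun t => φ t x) 0 1 := by
  have hint := intervalIntegrable_of_eq_add_integral zero_le_one hV.intervalIntegrable hV.norm_le
    (hV.aestronglyMeasurable x) (fun t ht => hφ t ht x)
  refine .of_eq_add_integral hint left_mem_uIcc fun t ht => ?_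
  rw [uIcc_of_le zero_le_one] at ht
  rw [hφ.apply_zero]
  exact hφ t ht x

lemma apply_one_eq (hφ : IsFlow V φ) (hV : IsCaratheodoryField V g) {y : ℝ → E}
    (hy : IsCaratheodorySolution V y 0 1) : φ 1 (y 0) = y 1 :=
  IsCaratheodorySolution.eqOn_of_lipschitzWith hV.lipschitzWith hV.intervalIntegrable
    (hφ.isCaratheodorySolution hV (y 0)) hy (hφ.apply_zero (y 0)) (right_mem_Icc.2 zero_le_one)

theorem apply_one_timeConcat {gV gW gVW : ℝ → ℝ≥0} (hφ : IsFlow V φ) (hψ : IsFlow W ψ)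
    (hχ : IsFlow (timeConcat V W) χ) (hV : IsCaratheodoryField V gV) (hW : IsCaratheodoryField W gW)
    (hVW : IsCaratheodoryField (timeConcat V W) gVW) : χ 1 = ψ 1 ∘ φ 1 := by
  funext x
  have hsol := (hφ.isCaratheodorySolution hV x).timeConcat (hψ.isCaratheodorySolution hW (φ 1 x))
    (hψ.apply_zero _).symm
  have hlate : ¬ (1 : ℝ) ≤ 1 / 2 := by norm_num
  have hend : (2 : ℝ) * 1 - 1 = 1 := by norm_num
  simpa only [zero_le_one, div_nonneg, zero_le_two, if_true, if_neg hlate, mul_zero, hend,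
    hφ.apply_zero, Function.comp_apply] using hχ.apply_one_eq hVW hsol

theorem leftInverse_apply_one_reverse {gV gR : ℝ → ℝ≥0} (hφ : IsFlow V φ)
    (hχ : IsFlow (reparam (-1) 1 V) χ) (hV : IsCaratheodoryField V gV)
    (hR : IsCaratheodoryField (reparam (-1) 1 V) gR) : Function.LeftInverse (χ 1) (φ 1) := by
  intro x
  simpa [hφ.apply_zero] using hχ.apply_one_eq hR (hφ.isCaratheodorySolution hV x).reverse

end IsFlow

end Flow

section Control

variable {H : Type*} [NormedAddCommGroup H]

lemma intervalIntegrable_norm_sq_reparam [NormedSpace ℝ H] {u : ℝ → H} {a b c d : ℝ}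
    (hu : IntervalIntegrable (fun t => ‖u t‖ ^ 2) volume (c * a + d) (c * b + d)) :
    IntervalIntegrable (fun t => ‖reparam c d u t‖ ^ 2) volume a b := by
  simpa [reparam, norm_smul, mul_pow] using (intervalIntegrable_comp_mul_add hu).const_mul (c ^ 2)

variable [MeasurableSpace H]

/-- The controls `u ∈ L²([0, 1], H)`, as everywhere defined measurable functions on `ℝ`. -/
structure IsL2Control (u : ℝ → H) : Prop where
  measurable : Measurable u
  integrableOn_norm_sq : IntegrableOn (fun t => ‖u t‖ ^ 2) (Icc (0 : ℝ) 1)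

lemma isL2Control_iff_intervalIntegrable {u : ℝ → H} :
    IsL2Control u ↔ Measurable u ∧ IntervalIntegrable (fun t => ‖u t‖ ^ 2) volume 0 1 := by
  rw [intervalIntegrable_iff_integrableOn_Icc_of_le zero_le_one]
  exact ⟨fun hu => ⟨hu.1, hu.2⟩, fun hu => ⟨hu.1, hu.2⟩⟩

variable [BorelSpace H] {u v : ℝ → H}

lemma measurable_reparam [NormedSpace ℝ H] (hu : Measurable u) (c d : ℝ) :
    Measurable (reparam c d u) :=
  (hu.comp ((measurable_const_mul c).add_const d)).const_smul c

namespace IsL2Control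

lemma intervalIntegrable_norm (hu : IsL2Control u) :
    IntervalIntegrable (fun t => ‖u t‖) volume 0 1 := by
  rw [intervalIntegrable_iff_integrableOn_Icc_of_le zero_le_one]
  have hmem : MemLp (fun t => ‖u t‖) 2 (volume.restrict (Icc 0 1)) :=
    (memLp_two_iff_integrable_sq hu.measurable.norm.aestronglyMeasurable).2 hu.integrableOn_norm_sq
  exact hmem.integrable one_le_two

variable [NormedSpace ℝ H]

lemma reverse (hu : IsL2Control u) : IsL2Control (reparam (-1) 1 u) := by
  rw [isL2Control_iff_intervalIntegrable] at hu ⊢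
  exact ⟨measurable_reparam hu.1 _ _,
    intervalIntegrable_norm_sq_reparam (by simpa using hu.2.symm)⟩

lemma timeConcat (hu : IsL2Control u) (hv : IsL2Control v) : IsL2Control (timeConcat u v) := by
  rw [isL2Control_iff_intervalIntegrable] at hu hv ⊢
  have hfirst : IntervalIntegrable (fun t => ‖reparam 2 0 u t‖ ^ 2) volume 0 (1 / 2) :=
    intervalIntegrable_norm_sq_reparam (by simpa using hu.2)
  have hsecond : IntervalIntegrable (fun t => ‖reparam 2 (-1) v t‖ ^ 2) volume (1 / 2) 1 :=
    intervalIntegrable_norm_sq_reparam (by norm_num; exact hv.2)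
  refine ⟨.ite measurableSet_Iic (measurable_reparam hu.1 _ _) (measurable_reparam hv.1 _ _),
    (hfirst.congr fun t ht => ?_).trans (hsecond.congr fun t ht => ?_)⟩ <;>
    rw [uIoc_of_le (by norm_num)] at ht
  · simp only [timeConcat_eq_left u v ht.2]
  · simp only [timeConcat_eq_right u v ht.1]

end IsL2Control

end Control

section Admissible

variable {E H : Type*} [NormedAddCommGroup E] [NormedSpace ℝ E] [NormedAddCommGroup H]
  [NormedSpace ℝ H]

/-- A space `H` of bounded Lipschitz vector fields on `E`, realised by `ι`, whose norm controls the
supremum and the Lipschitz constant. This is the only consequence of an embedding of `H` into the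
`C¹` vector fields that the dynamics sees. -/
structure IsAdmissible (ι : H →ₗ[ℝ] (E → E)) (C : ℝ≥0) : Prop where
  norm_le : ∀ h x, ‖ι h x‖ ≤ C * ‖h‖
  lipschitzWith : ∀ h, LipschitzWith (C * ‖h‖₊) (ι h)

namespace IsAdmissible

variable {ι : H →ₗ[ℝ] (E → E)} {C : ℝ≥0} {u v : ℝ → H} {φ ψ χ : ℝ → E → E}

lemma of_norm_add_norm_fderiv_le (hdiff : ∀ h, Differentiable ℝ (ι h))
    (hle : ∀ h x, ‖ι h x‖ + ‖fderiv ℝ (ι h) x‖ ≤ C * ‖h‖) : IsAdmissible ι C where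
  norm_le h x := (le_add_of_nonneg_right (norm_nonneg _)).trans (hle h x)
  lipschitzWith h := lipschitzWith_of_nnnorm_fderiv_le (hdiff h) fun x =>
    (le_add_of_nonneg_left (norm_nonneg _)).trans (hle h x)

lemma continuous_apply (hι : IsAdmissible ι C) (x : E) : Continuous fun h => ι h x :=
  (((LinearMap.proj x).comp ι).mkContinuous C fun h => hι.norm_le h x).continuous

variable [MeasurableSpace H] [BorelSpace H] [SecondCountableTopologyEither H E]

lemma isCaratheodoryField (hι : IsAdmissible ι C) (hu : IsL2Control u) :
    IsCaratheodoryField (fun t => ι (u t)) fun t => C * ‖u t‖₊ where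
  aestronglyMeasurable x :=
    ((hι.continuous_apply x).stronglyMeasurable.comp_measurable hu.measurable).aestronglyMeasurable
  norm_le t _ x := hι.norm_le (u t) x
  lipschitzWith t _ := hι.lipschitzWith (u t)
  intervalIntegrable := hu.intervalIntegrable_norm.const_mul C

lemma apply_one_timeConcat (hι : IsAdmissible ι C) (hu : IsL2Control u) (hv : IsL2Control v)
    (hφ : IsFlow (fun t => ι (u t)) φ) (hψ : IsFlow (fun t => ι (v t)) ψ)
    (hχ : IsFlow (fun t => ι (timeConcat u v t)) χ) : χ 1 = ψ 1 ∘ φ 1 := by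
  have huv := hι.isCaratheodoryField (hu.timeConcat hv)
  rw [map_timeConcat] at hχ huv
  exact hφ.apply_one_timeConcat hψ hχ (hι.isCaratheodoryField hu) (hι.isCaratheodoryField hv) huv

lemma leftInverse_apply_one_reverse (hι : IsAdmissible ι C) (hu : IsL2Control u)
    (hφ : IsFlow (fun t => ι (u t)) φ) (hχ : IsFlow (fun t => ι (reparam (-1) 1 u t)) χ) :
    Function.LeftInverse (χ 1) (φ 1) := by
  have hrev := hι.isCaratheodoryField hu.reverse
  rw [map_reparam] at hχ hrev
  exact hφ.leftInverse_apply_one_reverse hχ (hι.isCaratheodoryField hu) hrev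

end IsAdmissible

theorem flow_group_closed_general [CompleteSpace E] [MeasurableSpace H] [BorelSpace H]
    [SecondCountableTopologyEither H E] {ι : H →ₗ[ℝ] (E → E)} {C : ℝ≥0} (hι : IsAdmissible ι C)
    {Φ : (ℝ → H) → ℝ → E → E} (hΦ : ∀ u, IsL2Control u → IsFlow (fun t => ι (u t)) (Φ u))
    {u v : ℝ → H} (hu : IsL2Control u) (hv : IsL2Control v) :
    (∃ w, IsL2Control w ∧ Φ w 1 = Φ u 1 ∘ Φ v 1) ∧
      ∃ w', IsL2Control w' ∧
        Function.LeftInverse (Φ w' 1) (Φ u 1) ∧ Function.RightInverse (Φ w' 1) (Φ u 1) := by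
  have hvu := hv.timeConcat hu
  have hrev := hu.reverse
  refine ⟨⟨timeConcat v u, hvu, ?_⟩, reparam (-1) 1 u, hrev, ?_, ?_⟩
  · exact hι.apply_one_timeConcat hv hu (hΦ v hv) (hΦ u hu) (hΦ _ hvu)
  · exact hι.leftInverse_apply_one_reverse hu (hΦ u hu) (hΦ _ hrev)
  · refine hι.leftInverse_apply_one_reverse hrev (hΦ _ hrev) ?_
    rw [reparam_neg_one_one_reparam]
    exact hΦ u hu

end Admissible

/-- The set `G_H` of time-1 flows of vector fields `u ∈ L²([0,1],H)`, for an admissible space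
`H` of vector fields on `ℝ^d`, is a group: it is closed under composition and under inversion.
Here `Φ u` denotes the flow of the time-dependent vector field `ι ∘ u`. -/
theorem flow_group_closed {d : ℕ} (hd : 1 ≤ d)
    {H : Type*} [NormedAddCommGroup H] [InnerProductSpace ℝ H] [CompleteSpace H]
    [MeasurableSpace H] [BorelSpace H]
    (ι : H →ₗ[ℝ] (EuclideanSpace ℝ (Fin d) → EuclideanSpace ℝ (Fin d)))
    (hι : Function.Injective ι)
    (C : ℝ) (hCpos : 0 < C)
    (hadm : ∀ h : H, ContDiff ℝ 1 (ι h) ∧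
      ∀ x, ‖ι h x‖ + ‖fderiv ℝ (ι h) x‖ ≤ C * ‖h‖)
    (Φ : (ℝ → H) → ℝ → EuclideanSpace ℝ (Fin d) → EuclideanSpace ℝ (Fin d))
    (hΦ : ∀ u : ℝ → H, Measurable u →
      IntegrableOn (fun t => ‖u t‖ ^ 2) (Set.Icc (0:ℝ) 1) →
      (∀ t ∈ Set.Icc (0:ℝ) 1, ∀ x, Φ u t x = x + ∫ s in (0:ℝ)..t, ι (u s) (Φ u s x)) ∧
        ∀ t ∈ Set.Icc (0:ℝ) 1, Function.Bijective (Φ u t)) :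
    ∀ u v : ℝ → H, Measurable u → IntegrableOn (fun t => ‖u t‖ ^ 2) (Set.Icc (0:ℝ) 1) →
      Measurable v → IntegrableOn (fun t => ‖v t‖ ^ 2) (Set.Icc (0:ℝ) 1) →
      (∃ w : ℝ → H, Measurable w ∧ IntegrableOn (fun t => ‖w t‖ ^ 2) (Set.Icc (0:ℝ) 1) ∧
        Φ w 1 = Φ u 1 ∘ Φ v 1) ∧
      (∃ w' : ℝ → H, Measurable w' ∧ IntegrableOn (fun t => ‖w' t‖ ^ 2) (Set.Icc (0:ℝ) 1) ∧
        Function.LeftInverse (Φ w' 1) (Φ u 1) ∧ Function.RightInverse (Φ w' 1) (Φ u 1)) := by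
  have hι' : IsAdmissible ι ⟨C, hCpos.le⟩ :=
    .of_norm_add_norm_fderiv_le (fun h => (hadm h).1.differentiable one_ne_zero)
      fun h => (hadm h).2
  intro u v hu hu2 hv hv2
  obtain ⟨⟨w, hw, hcomp⟩, w', hw', hinv⟩ :=
    flow_group_closed_general hι' (fun u hu => (hΦ u hu.1 hu.2).1) ⟨hu, hu2⟩ ⟨hv, hv2⟩
  exact ⟨⟨w, hw.1, hw.2, hcomp⟩, w', hw'.1, hw'.2, hinv⟩
end
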